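/- arXiv:1007.2336 — 3 statements merged into one kernel-verified Lean document; each statement's English description precedes it below -/
import Mathlib

section
/- Suppose a_k ≤ 0 for k = 2, …, s. Then for every u ∈ U, Q^qnl(u) ≥ A ‖Du‖²_{ℓ²_ε}, where A := Σ_{k=1}^{s} k² a_k. -/
/-!
For `a k ≤ 0`, Cauchy–Schwarz `(∑_{j<k} x_j)² ≤ k ∑_{j<k} x_j²` bounds every atomistic term
from below by the continuum term at the same site (`atomistic_ge_continuum`). The condition
`K ≤ N - s` makes the atomistic and continuum index sets partition one period
(`sum_Aqnl_add_sum_Cqnl`), so the `k`-th contribution is at least `k * a k` times the sum over a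
full period of `∑_{j<k} (Du)²_{ℓ+j}`; by shift invariance of sums over a period
(`sum_rng_shift`) this is `k² * a k * ∑ (Du)²`.
-/

open Finset Real

noncomputable section

/-- scaled lattice spacing ε = 1/N -/
def eps (N : ℕ) : ℝ := 1 / N

/-- the index range ℓ = -N+1, …, N -/
def rng (N : ℕ) : Finset ℤ := Finset.Icc (-(N : ℤ) + 1) N

/-- 2N-periodicity of a sequence -/
def Periodic2N (N : ℕ) (u : ℤ → ℝ) : Prop := ∀ ℓ : ℤ, u (ℓ + 2 * (N : ℤ)) = u ℓ

/-- the space 𝒰 of 2N-periodic zero-mean displacements -/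
def memU (N : ℕ) (u : ℤ → ℝ) : Prop :=
  Periodic2N N u ∧ ∑ ℓ ∈ rng N, u ℓ = 0

/-- discrete differentiation operator: (Dv)_ℓ = (v_ℓ - v_{ℓ-1})/ε -/
def Dv (N : ℕ) (v : ℤ → ℝ) : ℤ → ℝ := fun ℓ => (v ℓ - v (ℓ - 1)) / eps N

/-- squared discrete ℓ²_ε norm -/
def nsq (N : ℕ) (v : ℤ → ℝ) : ℝ := eps N * ∑ ℓ ∈ rng N, v ℓ ^ 2

/-- discrete ℓ²_ε norm -/
def nrm (N : ℕ) (v : ℤ → ℝ) : ℝ := Real.sqrt (nsq N v)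

/-- squared discrete ℓ²_ε seminorm over an index set S -/
def nsqS (N : ℕ) (S : Finset ℤ) (v : ℤ → ℝ) : ℝ := eps N * ∑ ℓ ∈ S, v ℓ ^ 2

/-- discrete ℓ²_ε seminorm over an index set S -/
def nrmS (N : ℕ) (S : Finset ℤ) (v : ℤ → ℝ) : ℝ := Real.sqrt (nsqS N S v)

/-- discrete ℓ^∞ norm over an index set S -/
def linf (S : Finset ℤ) (v : ℤ → ℝ) : ℝ := sSup ((fun ℓ => |v ℓ|) '' (S : Set ℤ))

/-- the interfacial index set 𝒜_qnl(k) -/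
def Aqnl (K : ℤ) (k : ℕ) : Finset ℤ := Finset.Icc (-K - (k : ℤ) + 1) (K + 1)

/-- the continuum index set 𝒞_qnl(k) -/
def Cqnl (N : ℕ) (K : ℤ) (k : ℕ) : Finset ℤ :=
  Finset.Icc (-(N : ℤ) + 1) (-K - (k : ℤ)) ∪ Finset.Icc (K + 2) (N : ℤ)

/-- the interface ℐ_qnl(k) between continuum and atomistic regions -/
def Iqnl (K : ℤ) (k : ℕ) : Finset ℤ :=
  Finset.Icc (-K - (k : ℤ) + 1) (-K - 1) ∪ Finset.Icc (K + 2) (K + (k : ℤ))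

/-- the extended continuum region 𝒞̃_qnl(k) = 𝒞_qnl(k) ∪ ℐ_qnl(k) -/
def Ctil (N : ℕ) (K : ℤ) (k : ℕ) : Finset ℤ := Cqnl N K k ∪ Iqnl K k

/-- the s-th nearest-neighbor QNL Hessian quadratic form -/
def Qqnl (N s : ℕ) (K : ℤ) (a : ℕ → ℝ) (u : ℤ → ℝ) : ℝ :=
  eps N * ∑ ℓ ∈ rng N, a 1 * (Dv N u ℓ) ^ 2
    + eps N * ∑ k ∈ Finset.Icc 2 s,
        ((∑ ℓ ∈ Aqnl K k, a k * (∑ j ∈ Finset.range k, Dv N u (ℓ + (j : ℤ))) ^ 2)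
          + ∑ ℓ ∈ Cqnl N K k, (k : ℝ) * a k * ∑ j ∈ Finset.range k, (Dv N u (ℓ + (j : ℤ))) ^ 2)

lemma sum_rng_shift_one (N : ℕ) (f : ℤ → ℝ) (hf : Periodic2N N f) :
    ∑ ℓ ∈ rng N, f (ℓ + 1) = ∑ ℓ ∈ rng N, f ℓ := by
  rcases Nat.eq_zero_or_pos N with rfl | hN
  · simp [rng]
  have himg : ∑ ℓ ∈ rng N, f (ℓ + 1) = ∑ m ∈ Finset.Icc (-(N : ℤ) + 2) (N + 1), f m := by
    refine Finset.sum_bij (fun ℓ _ => ℓ + 1) ?_ ?_ ?_ ?_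
    · intro ℓ hℓ
      simp only [rng, Finset.mem_Icc] at hℓ ⊢
      omega
    · intro x _ y _ h
      simpa using h
    · intro m hm
      refine ⟨m - 1, ?_, by ring⟩
      simp only [rng, Finset.mem_Icc] at hm ⊢
      omega
    · intros
      rfl
  have hleft : rng N = insert (-(N : ℤ) + 1) (Finset.Icc (-(N : ℤ) + 2) N) := by
    ext x
    simp only [rng, Finset.mem_insert, Finset.mem_Icc]
    omega
  have hright : Finset.Icc (-(N : ℤ) + 2) (N + 1)
      = insert ((N : ℤ) + 1) (Finset.Icc (-(N : ℤ) + 2) N) := by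
    ext x
    simp only [Finset.mem_insert, Finset.mem_Icc]
    omega
  rw [himg, hleft, hright, Finset.sum_insert (by simp), Finset.sum_insert (by simp),
    ← hf (-(N : ℤ) + 1)]
  congr 2
  ring

lemma sum_rng_shift (N : ℕ) (f : ℤ → ℝ) (hf : Periodic2N N f) (j : ℕ) :
    ∑ ℓ ∈ rng N, f (ℓ + (j : ℤ)) = ∑ ℓ ∈ rng N, f ℓ := by
  induction j with
  | zero => simp
  | succ j ih =>
    rw [← ih, ← sum_rng_shift_one N (fun ℓ => f (ℓ + (j : ℤ)))]
    · refine Finset.sum_congr rfl fun ℓ _ => ?_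
      congr 1
      push_cast
      ring
    · intro ℓ
      change f (ℓ + 2 * (N : ℤ) + j) = f (ℓ + j)
      rw [← hf (ℓ + j)]
      congr 1
      ring

lemma Dv_periodic (N : ℕ) (u : ℤ → ℝ) (hu : Periodic2N N u) : Periodic2N N (Dv N u) := by
  intro ℓ
  have h := hu (ℓ - 1)
  rw [show ℓ - 1 + 2 * (N : ℤ) = ℓ + 2 * (N : ℤ) - 1 by ring] at h
  simp only [Dv, hu ℓ, h]

/-- The atomistic and continuum index sets partition one period. -/
lemma sum_Aqnl_add_sum_Cqnl (N s k : ℕ) (K : ℤ) (hk : k ∈ Finset.Icc 2 s)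
    (hK1 : 1 ≤ K) (hK2 : K ≤ (N : ℤ) - (s : ℤ)) (f : ℤ → ℝ) :
    ∑ ℓ ∈ Aqnl K k, f ℓ + ∑ ℓ ∈ Cqnl N K k, f ℓ = ∑ ℓ ∈ rng N, f ℓ := by
  rw [Finset.mem_Icc] at hk
  rw [← Finset.sum_union]
  · congr 1
    ext x
    simp only [Aqnl, Cqnl, rng, Finset.mem_union, Finset.mem_Icc]
    omega
  · rw [Finset.disjoint_left]
    intro x
    simp only [Aqnl, Cqnl, Finset.mem_union, Finset.mem_Icc]
    omega

lemma atomistic_ge_continuum (k : ℕ) (c : ℝ) (hc : c ≤ 0) (x : ℕ → ℝ) :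
    (k : ℝ) * c * ∑ j ∈ Finset.range k, x j ^ 2 ≤ c * (∑ j ∈ Finset.range k, x j) ^ 2 := by
  have h := sq_sum_le_card_mul_sum_sq (s := Finset.range k) (f := x)
  rw [Finset.card_range] at h
  linarith [mul_le_mul_of_nonpos_left h hc]

/-- lower bound for the s-th nearest-neighbor QNL Hessian. -/
theorem qnl_hessian_lower_bound (N : ℕ) (hN : 0 < N) (s : ℕ) (hs : 2 ≤ s)
    (a : ℕ → ℝ) (ha : ∀ k ∈ Finset.Icc 2 s, a k ≤ 0)
    (K : ℤ) (hK1 : 1 ≤ K) (hK2 : K ≤ (N : ℤ) - (s : ℤ))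
    (u : ℤ → ℝ) (hu : memU N u) :
    Qqnl N s K a u ≥ (∑ k ∈ Finset.Icc 1 s, (k : ℝ) ^ 2 * a k) * nsq N (Dv N u) := by
  have hk : ∀ k ∈ Finset.Icc 2 s, (k : ℝ) ^ 2 * a k * ∑ ℓ ∈ rng N, (Dv N u ℓ) ^ 2 ≤
      (∑ ℓ ∈ Aqnl K k, a k * (∑ j ∈ Finset.range k, Dv N u (ℓ + (j : ℤ))) ^ 2)
        + ∑ ℓ ∈ Cqnl N K k,
            (k : ℝ) * a k * ∑ j ∈ Finset.range k, (Dv N u (ℓ + (j : ℤ))) ^ 2 := by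
    intro k hk
    have hper : Periodic2N N (fun ℓ => (Dv N u ℓ) ^ 2) := fun ℓ => by
      simp only [Dv_periodic N u hu.1 ℓ]
    calc (k : ℝ) ^ 2 * a k * ∑ ℓ ∈ rng N, (Dv N u ℓ) ^ 2
        = ∑ ℓ ∈ rng N,
            (k : ℝ) * a k * ∑ j ∈ Finset.range k, (Dv N u (ℓ + (j : ℤ))) ^ 2 := by
          rw [← Finset.mul_sum, Finset.sum_comm,
            Finset.sum_congr rfl fun j _ => sum_rng_shift N _ hper j]
          simp only [Finset.sum_const, Finset.card_range, nsmul_eq_mul]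
          ring
      _ = _ := (sum_Aqnl_add_sum_Cqnl N s k K hk hK1 hK2 _).symm
      _ ≤ _ := by
          refine add_le_add (Finset.sum_le_sum fun ℓ _ => ?_) le_rfl
          exact atomistic_ge_continuum k (a k) (ha k hk) fun j => Dv N u (ℓ + (j : ℤ))
  have heps : 0 ≤ eps N := by
    unfold eps
    positivity
  have hsplit : Finset.Icc 1 s = insert 1 (Finset.Icc 2 s) := by
    ext x
    simp only [Finset.mem_insert, Finset.mem_Icc]
    omega
  have hsum := mul_le_mul_of_nonneg_left (Finset.sum_le_sum hk) heps
  rw [← Finset.sum_mul] at hsum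
  rw [hsplit, Finset.sum_insert (by simp)]
  unfold Qqnl nsq
  rw [← Finset.mul_sum]
  push_cast
  linarith
end
end

section
/- For all u, w ∈ U, the difference of the QNL and atomistic Hessian bilinear forms equals the consistency-error form: B^qnl(u, w) − B^a(u, w) = ε Σ_{k=2}^{s} a_k Σ_{ℓ∈C_qnl(k)} Σ_{j=0}^{k−1} ( k(Du)_{ℓ+j} − Σ_{t=0}^{k−1} (Du)_{ℓ+t} ) (Dw)_{ℓ+j}. -/
/-! For each interaction range `k` the index sets `Aqnl K k` and `Cqnl N K k` partition one period
`rng N` (`sum_rng_split`); this is where `K ≤ N - s` enters. The nearest-neighbour terms and the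
terms indexed by `Aqnl K k` of the two forms coincide, so only the sum over `Cqnl N K k` survives in
the difference, and there the claim holds bond by bond by expanding the product
(`cauchyBorn_bond_defect`). -/

open Finset Real

noncomputable section

/-- the s-th nearest-neighbor atomistic Hessian bilinear form -/
def Ba (N s : ℕ) (a : ℕ → ℝ) (u w : ℤ → ℝ) : ℝ :=
  eps N * ∑ ℓ ∈ rng N, ∑ k ∈ Finset.Icc 1 s,
    a k * (∑ j ∈ Finset.range k, Dv N u (ℓ + (j : ℤ)))
        * (∑ j ∈ Finset.range k, Dv N w (ℓ + (j : ℤ)))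

/-- the s-th nearest-neighbor QNL Hessian bilinear form -/
def Bqnl (N s : ℕ) (K : ℤ) (a : ℕ → ℝ) (u w : ℤ → ℝ) : ℝ :=
  eps N * ∑ ℓ ∈ rng N, a 1 * Dv N u ℓ * Dv N w ℓ
    + eps N * ∑ k ∈ Finset.Icc 2 s,
        ((∑ ℓ ∈ Aqnl K k,
            a k * (∑ j ∈ Finset.range k, Dv N u (ℓ + (j : ℤ)))
                * (∑ j ∈ Finset.range k, Dv N w (ℓ + (j : ℤ))))
          + ∑ ℓ ∈ Cqnl N K k,
              (k : ℝ) * a k * ∑ j ∈ Finset.range k, Dv N u (ℓ + (j : ℤ)) * Dv N w (ℓ + (j : ℤ)))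

/-- the linearized consistency-error bilinear form -/
def Tconsist (N s : ℕ) (K : ℤ) (a : ℕ → ℝ) (u w : ℤ → ℝ) : ℝ :=
  eps N * ∑ k ∈ Finset.Icc 2 s, a k * ∑ ℓ ∈ Cqnl N K k, ∑ j ∈ Finset.range k,
    ((k : ℝ) * Dv N u (ℓ + (j : ℤ)) - ∑ t ∈ Finset.range k, Dv N u (ℓ + (t : ℤ)))
      * Dv N w (ℓ + (j : ℤ))

lemma sum_rng_split (N s : ℕ) (K : ℤ) (k : ℕ) (hK1 : 1 ≤ K) (hK2 : K ≤ (N : ℤ) - (s : ℤ))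
    (hk2 : 2 ≤ k) (hks : k ≤ s) (f : ℤ → ℝ) :
    ∑ ℓ ∈ rng N, f ℓ = ∑ ℓ ∈ Aqnl K k, f ℓ + ∑ ℓ ∈ Cqnl N K k, f ℓ := by
  have hdisj : Disjoint (Aqnl K k) (Cqnl N K k) := by
    rw [Finset.disjoint_left]
    intro x
    simp only [Aqnl, Cqnl, Finset.mem_union, Finset.mem_Icc]
    omega
  rw [← Finset.sum_union hdisj]
  congr 1
  ext x
  simp only [rng, Aqnl, Cqnl, Finset.mem_union, Finset.mem_Icc]
  omega

/-- The difference between the Cauchy–Born and the atomistic contribution of a single bond of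
range `k`, with `x` and `y` the strains along the bond. -/
lemma cauchyBorn_bond_defect (c : ℝ) (k : ℕ) (x y : ℕ → ℝ) :
    (k : ℝ) * c * ∑ j ∈ Finset.range k, x j * y j
        - c * (∑ j ∈ Finset.range k, x j) * (∑ j ∈ Finset.range k, y j)
      = c * ∑ j ∈ Finset.range k, ((k : ℝ) * x j - ∑ t ∈ Finset.range k, x t) * y j := by
  simp only [sub_mul, Finset.sum_sub_distrib, mul_assoc, ← Finset.mul_sum]
  ring

/-- the difference of the QNL and atomistic Hessian bilinear forms equals
the consistency-error form. -/
theorem qnl_consistency_error_identity (N : ℕ) (hN : 0 < N) (s : ℕ) (hs : 2 ≤ s)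
    (a : ℕ → ℝ) (K : ℤ) (hK1 : 1 ≤ K) (hK2 : K ≤ (N : ℤ) - (s : ℤ))
    (u w : ℤ → ℝ) (hu : memU N u) (hw : memU N w) :
    Bqnl N s K a u w - Ba N s a u w = Tconsist N s K a u w := by
  have hsplit : ∀ k ∈ Finset.Icc 2 s, ∀ f : ℤ → ℝ,
      ∑ ℓ ∈ rng N, f ℓ = ∑ ℓ ∈ Aqnl K k, f ℓ + ∑ ℓ ∈ Cqnl N K k, f ℓ := by
    intro k hk f
    exact sum_rng_split N s K k hK1 hK2 (Finset.mem_Icc.mp hk).1 (Finset.mem_Icc.mp hk).2 f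
  have hIcc : Finset.Icc 1 s = insert 1 (Finset.Icc 2 s) := by
    ext k
    simp only [Finset.mem_Icc, Finset.mem_insert]
    omega
  unfold Bqnl Ba Tconsist
  rw [Finset.sum_comm, hIcc, Finset.sum_insert (by simp), mul_add, add_sub_add_comm]
  simp only [Finset.sum_range_one, Nat.cast_zero, add_zero, sub_self, zero_add]
  rw [← mul_sub, ← Finset.sum_sub_distrib]
  congr 1
  refine Finset.sum_congr rfl fun k hk => ?_
  rw [hsplit k hk, add_sub_add_left_eq_sub, ← Finset.sum_sub_distrib, Finset.mul_sum]
  exact Finset.sum_congr rfl fun ℓ _ => cauchyBorn_bond_defect _ _ _ _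
end
end

section
/- There exist positive constants C₁(k) and C₂(k) for k = 2, …, s, depending only on k and not on N, K, u, w, or the coefficients a_k, such that for all u, w ∈ U: |T(u, w)| ≤ [ Σ_{k=2}^{s} ε² C₁(k) |a_k| ‖D³u‖_{ℓ²_ε(C̃_qnl(k))} + Σ_{k=2}^{s} ε C₂(k) |a_k| ‖D²u‖_{ℓ²_ε(I_qnl(k))} ] · ‖Dw‖_{ℓ²_ε}. -/
/-!
The proof treats each `k` separately. Write `f = Du`, `G = D²u`, `Q = D³u`, `h = Dw`. By periodicity
the continuum region, which wraps around the period, is the single integer interval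
`[K+2, 2N-K-k]`, its extension is `[K+2, 2N-K-1]`, and the interface consists of the `k-1`
points at either end of the extended interval.

Taylor expansion about the site `ℓ+j` gives (`taylor_bound`)
`f(ℓ+j) - f(ℓ+t) = (j-t) ε G(ℓ+j) + O(ε² k ∑_{i<k} |Q(ℓ+i)|)`, where only sites `ℓ, …, ℓ+k-1`
of the extended region are used.

* The remainders, tested with `h`, are bounded by Cauchy–Schwarz (`remainder_bound`); this is the
  `D³u` term, with constant `k⁴`.
* The leading terms are `ε ∑_j c_j ∑_ℓ (G h)(ℓ+j)` with `c_j = ∑_t (j-t)`. As `∑_j c_j = 0`,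
  and the sums of `G h` over the `k` shifted intervals differ only by contributions of the interface,
  everything cancels except interface terms (`leading_bound`); this is the `D²u` term, with
  constant `k³`.
-/


open Finset Real

noncomputable section

/-! ### Sums over shifted intervals -/

lemma sum_Icc_shift (v : ℤ → ℝ) (a b c : ℤ) :
    ∑ x ∈ Finset.Icc a b, v (x + c) = ∑ x ∈ Finset.Icc (a + c) (b + c), v x := by
  rw [← Finset.map_add_right_Icc, Finset.sum_map]
  rfl

lemma sum_Icc_split (v : ℤ → ℝ) (a b c : ℤ) (h1 : a ≤ b + 1) (h2 : b ≤ c) :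
    ∑ x ∈ Finset.Icc a c, v x
      = ∑ x ∈ Finset.Icc a b, v x + ∑ x ∈ Finset.Icc (b + 1) c, v x := by
  rw [← Finset.sum_union]
  · congr 1
    ext x
    simp only [Finset.mem_union, Finset.mem_Icc]
    omega
  · rw [Finset.disjoint_left]
    intro x
    simp only [Finset.mem_Icc]
    omega

lemma sum_Icc_mono (v : ℤ → ℝ) (hv : ∀ x, 0 ≤ v x) (a b c d : ℤ) (h1 : c ≤ a) (h2 : b ≤ d) :
    ∑ x ∈ Finset.Icc a b, v x ≤ ∑ x ∈ Finset.Icc c d, v x :=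
  Finset.sum_le_sum_of_subset_of_nonneg (Finset.Icc_subset_Icc h1 h2) fun x _ _ => hv x

/-! ### Unwrapping the periodic index sets -/

lemma sum_Icc_period {N : ℕ} {v : ℤ → ℝ} (hv : Periodic2N N v) (a b : ℤ) :
    ∑ x ∈ Finset.Icc a b, v x
      = ∑ x ∈ Finset.Icc (a + 2 * (N : ℤ)) (b + 2 * (N : ℤ)), v x := by
  rw [← sum_Icc_shift]
  exact Finset.sum_congr rfl fun x _ => (hv x).symm

lemma sum_wrap {N : ℕ} {v : ℤ → ℝ} (hv : Periodic2N N v) (A B : ℤ) (hA : A ≤ (N : ℤ) + 1)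
    (hB : (N : ℤ) ≤ B) (hlt : B - 2 * N < A) :
    ∑ x ∈ Finset.Icc (-(N : ℤ) + 1) (B - 2 * N) ∪ Finset.Icc A (N : ℤ), v x
      = ∑ x ∈ Finset.Icc A B, v x := by
  rw [Finset.sum_union, sum_Icc_period hv (-(N : ℤ) + 1), sum_Icc_split v A N B hA hB, add_comm]
  · congr 3 <;> ring
  · rw [Finset.disjoint_left]
    intro x
    simp only [Finset.mem_Icc]
    omega

lemma sum_Cqnl {N : ℕ} {v : ℤ → ℝ} (hv : Periodic2N N v) (K : ℤ) (k : ℕ) (hk : 2 ≤ k)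
    (hK : 1 ≤ K) (hKN : K ≤ (N : ℤ) - k) :
    ∑ x ∈ Cqnl N K k, v x = ∑ x ∈ Finset.Icc (K + 2) (2 * (N : ℤ) - K - k), v x := by
  rw [← sum_wrap hv (K + 2) _ (by omega) (by omega) (by omega), Cqnl]
  congr 3
  ring

lemma Ctil_eq (N : ℕ) (K : ℤ) (k : ℕ) (hk : 2 ≤ k) (hKN : K ≤ (N : ℤ) - k) :
    Ctil N K k = Finset.Icc (-(N : ℤ) + 1) (-K - 1) ∪ Finset.Icc (K + 2) (N : ℤ) := by
  ext x
  simp only [Ctil, Cqnl, Iqnl, Finset.mem_union, Finset.mem_Icc]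
  omega

lemma sum_Ctil {N : ℕ} {v : ℤ → ℝ} (hv : Periodic2N N v) (K : ℤ) (k : ℕ) (hk : 2 ≤ k)
    (hK : 1 ≤ K) (hKN : K ≤ (N : ℤ) - k) :
    ∑ x ∈ Ctil N K k, v x = ∑ x ∈ Finset.Icc (K + 2) (2 * (N : ℤ) - K - 1), v x := by
  rw [← sum_wrap hv (K + 2) _ (by omega) (by omega) (by omega), Ctil_eq N K k hk hKN]
  congr 3
  ring

lemma sum_Iqnl {N : ℕ} {v : ℤ → ℝ} (hv : Periodic2N N v) (K : ℤ) (k : ℕ) (hK : 1 ≤ K) :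
    ∑ x ∈ Iqnl K k, v x = ∑ x ∈ Finset.Icc (K + 2) (K + k), v x
      + ∑ x ∈ Finset.Icc (2 * (N : ℤ) - K - k + 1) (2 * (N : ℤ) - K - 1), v x := by
  rw [Iqnl, Finset.sum_union, sum_Icc_period hv (-K - k + 1), add_comm]
  · congr 3 <;> ring
  · rw [Finset.disjoint_left]
    intro x
    simp only [Finset.mem_Icc]
    omega

lemma Ctil_subset_rng (N : ℕ) (K : ℤ) (k : ℕ) (hk : 2 ≤ k) (hK : 1 ≤ K)
    (hKN : K ≤ (N : ℤ) - k) : Ctil N K k ⊆ rng N := by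
  rw [Ctil_eq N K k hk hKN]
  intro x
  simp only [rng, Finset.mem_union, Finset.mem_Icc]
  omega

lemma Iqnl_subset_rng (N : ℕ) (K : ℤ) (k : ℕ) (hk : 2 ≤ k) (hK : 1 ≤ K)
    (hKN : K ≤ (N : ℤ) - k) : Iqnl K k ⊆ rng N :=
  Finset.subset_union_right.trans (Ctil_subset_rng N K k hk hK hKN)

lemma Dv_periodic_s16 {N : ℕ} {v : ℤ → ℝ} (hv : Periodic2N N v) : Periodic2N N (Dv N v) := by
  intro x
  simp only [Dv]
  rw [hv x, show x + 2 * (N : ℤ) - 1 = (x - 1) + 2 * (N : ℤ) by ring, hv (x - 1)]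

/-! ### Taylor expansion -/

lemma telescope_bound {e : ℝ} (he : 0 ≤ e) {G Q : ℤ → ℝ} (hG : ∀ x, G x - G (x - 1) = e * Q x)
    (ℓ : ℤ) (k a n : ℕ) (h : a + n < k) :
    |G (ℓ + (a + n : ℕ)) - G (ℓ + a)| ≤ e * ∑ i ∈ Finset.range k, |Q (ℓ + i)| := by
  have key : G (ℓ + (a + n : ℕ)) - G (ℓ + a)
      = e * ∑ i ∈ Finset.range n, Q (ℓ + ((a + 1 + i : ℕ) : ℤ)) := by
    clear h
    induction n with
    | zero => simp
    | succ n ih =>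
      rw [Finset.sum_range_succ, mul_add, ← ih, ← hG]
      have h1 : ℓ + ((a + 1 + n : ℕ) : ℤ) - 1 = ℓ + ((a + n : ℕ) : ℤ) := by push_cast; ring
      have h2 : ℓ + ((a + (n + 1) : ℕ) : ℤ) = ℓ + ((a + 1 + n : ℕ) : ℤ) := by push_cast; ring
      rw [h1, h2]
      ring
  rw [key, abs_mul, abs_of_nonneg he]
  refine mul_le_mul_of_nonneg_left ((Finset.abs_sum_le_sum_abs _ _).trans ?_) he
  have h3 : ∑ i ∈ Finset.range n, |Q (ℓ + ((a + 1 + i : ℕ) : ℤ))|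
      = ∑ i ∈ Finset.Ico (a + 1) (a + 1 + n), |Q (ℓ + (i : ℤ))| := by
    rw [Finset.sum_Ico_eq_sum_range]
    simp
  rw [h3]
  refine Finset.sum_le_sum_of_subset_of_nonneg ?_ fun _ _ _ => abs_nonneg _
  intro x
  simp only [Finset.mem_Ico, Finset.mem_range]
  omega

lemma diff_bound {e : ℝ} (he : 0 ≤ e) {G Q : ℤ → ℝ} (hG : ∀ x, G x - G (x - 1) = e * Q x)
    (ℓ : ℤ) (k i j : ℕ) (hi : i < k) (hj : j < k) :
    |G (ℓ + i) - G (ℓ + j)| ≤ e * ∑ i ∈ Finset.range k, |Q (ℓ + i)| := by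
  rcases le_total i j with h | h
  · obtain ⟨n, rfl⟩ := Nat.exists_eq_add_of_le h
    rw [abs_sub_comm]
    exact telescope_bound he hG ℓ k i n hj
  · obtain ⟨n, rfl⟩ := Nat.exists_eq_add_of_le h
    exact telescope_bound he hG ℓ k j n hi

/-- First-order Taylor expansion of `f` about `ℓ + j`. The affine part is removed by subtracting
`x ↦ x e G(ℓ+j)` from `f`, so that the remainder is the difference of a sequence with increments
`e (G(x) - G(ℓ+j))`. -/
lemma taylor_bound {e : ℝ} (he : 0 ≤ e) {f G Q : ℤ → ℝ}
    (hf : ∀ x, f x - f (x - 1) = e * G x) (hG : ∀ x, G x - G (x - 1) = e * Q x)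
    (ℓ : ℤ) (k j t : ℕ) (hj : j < k) (ht : t < k) :
    |f (ℓ + j) - f (ℓ + t) - ((j : ℝ) - t) * (e * G (ℓ + j))|
      ≤ e ^ 2 * (k * ∑ i ∈ Finset.range k, |Q (ℓ + i)|) := by
  set M := ∑ i ∈ Finset.range k, |Q (ℓ + i)| with hM
  have h1 := diff_bound he (G := fun x => f x - (x : ℝ) * (e * G (ℓ + j)))
    (Q := fun x => G x - G (ℓ + j)) (fun x => by
      have := hf x
      push_cast
      linear_combination this) ℓ k j t hj ht
  have h2 : ∑ i ∈ Finset.range k, |G (ℓ + i) - G (ℓ + j)| ≤ k * (e * M) := by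
    refine (Finset.sum_le_card_nsmul _ _ (e * M) fun i hi => ?_).trans (by simp)
    exact diff_bound he hG ℓ k i j (Finset.mem_range.1 hi) hj
  calc _ = |f (ℓ + j) - ((ℓ + j : ℤ) : ℝ) * (e * G (ℓ + j))
            - (f (ℓ + t) - ((ℓ + t : ℤ) : ℝ) * (e * G (ℓ + j)))| := by
        congr 1; push_cast; ring
    _ ≤ e * (k * (e * M)) := h1.trans (mul_le_mul_of_nonneg_left h2 he)
    _ = _ := by ring

/-! ### The two contributions for a fixed interaction range -/

lemma shifted_cauchy_schwarz (Q h : ℤ → ℝ) (A B : ℤ) (k i j : ℕ) (hi : i < k) (hj : j < k) :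
    ∑ ℓ ∈ Finset.Icc A B, |Q (ℓ + i)| * |h (ℓ + j)|
      ≤ √(∑ x ∈ Finset.Icc A (B + k - 1), Q x ^ 2)
        * √(∑ x ∈ Finset.Icc A (B + k - 1), h x ^ 2) := by
  refine (Real.sum_mul_le_sqrt_mul_sqrt _ _ _).trans ?_
  simp only [sq_abs]
  rw [sum_Icc_shift (fun x => Q x ^ 2), sum_Icc_shift (fun x => h x ^ 2)]
  refine mul_le_mul (Real.sqrt_le_sqrt ?_) (Real.sqrt_le_sqrt ?_) (Real.sqrt_nonneg _)
    (Real.sqrt_nonneg _)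
  · exact sum_Icc_mono _ (fun x => sq_nonneg _) _ _ _ _ (by omega) (by omega)
  · exact sum_Icc_mono _ (fun x => sq_nonneg _) _ _ _ _ (by omega) (by omega)

lemma remainder_bound (Q h : ℤ → ℝ) (r : ℤ → ℕ → ℕ → ℝ) (c : ℝ) (hc : 0 ≤ c) (A B : ℤ) (k : ℕ)
    (hr : ∀ ℓ, ∀ j < k, ∀ t < k, |r ℓ j t| ≤ c * (k * ∑ i ∈ Finset.range k, |Q (ℓ + i)|)) :
    |∑ ℓ ∈ Finset.Icc A B, ∑ j ∈ Finset.range k, (∑ t ∈ Finset.range k, r ℓ j t) * h (ℓ + j)|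
      ≤ c * (k : ℝ) ^ 4 * (√(∑ x ∈ Finset.Icc A (B + k - 1), Q x ^ 2)
        * √(∑ x ∈ Finset.Icc A (B + k - 1), h x ^ 2)) := by
  set P := √(∑ x ∈ Finset.Icc A (B + k - 1), Q x ^ 2)
    * √(∑ x ∈ Finset.Icc A (B + k - 1), h x ^ 2)
  have h1 : ∀ ℓ, ∀ j < k, |(∑ t ∈ Finset.range k, r ℓ j t) * h (ℓ + j)|
      ≤ c * (k : ℝ) ^ 2 * ∑ i ∈ Finset.range k, |Q (ℓ + i)| * |h (ℓ + j)| := by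
    intro ℓ j hj
    rw [abs_mul, ← Finset.sum_mul, ← mul_assoc]
    refine mul_le_mul_of_nonneg_right ?_ (abs_nonneg _)
    refine (Finset.abs_sum_le_sum_abs _ _).trans ?_
    refine (Finset.sum_le_card_nsmul _ _ _ fun t ht => hr ℓ j hj t (Finset.mem_range.1 ht)).trans ?_
    rw [Finset.card_range, nsmul_eq_mul]
    exact le_of_eq (by ring)
  calc _ ≤ ∑ ℓ ∈ Finset.Icc A B, ∑ j ∈ Finset.range k,
          c * (k : ℝ) ^ 2 * ∑ i ∈ Finset.range k, |Q (ℓ + i)| * |h (ℓ + j)| := by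
        refine (Finset.abs_sum_le_sum_abs _ _).trans (Finset.sum_le_sum fun ℓ _ => ?_)
        refine (Finset.abs_sum_le_sum_abs _ _).trans (Finset.sum_le_sum fun j hj => ?_)
        exact h1 ℓ j (Finset.mem_range.1 hj)
    _ = c * (k : ℝ) ^ 2 * ∑ j ∈ Finset.range k, ∑ i ∈ Finset.range k,
          ∑ ℓ ∈ Finset.Icc A B, |Q (ℓ + i)| * |h (ℓ + j)| := by
        rw [Finset.sum_comm, Finset.mul_sum]
        refine Finset.sum_congr rfl fun j _ => ?_
        rw [← Finset.mul_sum, Finset.sum_comm]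
    _ ≤ c * (k : ℝ) ^ 2 * ∑ j ∈ Finset.range k, ∑ i ∈ Finset.range k, P := by
        gcongr with j hj i hi
        exact shifted_cauchy_schwarz Q h A B k i j (Finset.mem_range.1 hi) (Finset.mem_range.1 hj)
    _ = _ := by
        simp only [Finset.sum_const, Finset.card_range, nsmul_eq_mul]
        ring

/-- Since the weights `∑ t, (j - t)` sum to zero over `j`, the sum of `v` over the whole interval
`[A, B+k-1]` may be subtracted from each shifted sum, which leaves only the end intervals. -/
lemma leading_bound (v : ℤ → ℝ) (A B : ℤ) (k : ℕ) (hAB : A ≤ B + 1) :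
    |∑ ℓ ∈ Finset.Icc A B, ∑ j ∈ Finset.range k,
        (∑ t ∈ Finset.range k, ((j : ℝ) - t)) * v (ℓ + j)|
      ≤ (k : ℝ) ^ 3 * (∑ x ∈ Finset.Icc A (A + k - 2), |v x|
        + ∑ x ∈ Finset.Icc (B + 1) (B + k - 1), |v x|) := by
  set E := ∑ x ∈ Finset.Icc A (A + k - 2), |v x| + ∑ x ∈ Finset.Icc (B + 1) (B + k - 1), |v x|
  set S := ∑ x ∈ Finset.Icc A (B + k - 1), v x with hS
  have hzero : ∑ j ∈ Finset.range k, ∑ t ∈ Finset.range k, ((j : ℝ) - t) = 0 := by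
    simp only [Finset.sum_sub_distrib]
    rw [Finset.sum_comm, sub_self]
  have hc : ∀ j < k, |∑ t ∈ Finset.range k, ((j : ℝ) - t)| ≤ (k : ℝ) ^ 2 := by
    intro j hj
    refine (Finset.abs_sum_le_sum_abs _ _).trans ?_
    refine (Finset.sum_le_card_nsmul _ _ (k : ℝ) fun t ht => ?_).trans ?_
    · have h1 : (j : ℝ) ≤ k := by exact_mod_cast hj.le
      have h2 : (t : ℝ) ≤ k := by exact_mod_cast (Finset.mem_range.1 ht).le
      have h3 : (0 : ℝ) ≤ j := j.cast_nonneg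
      have h4 : (0 : ℝ) ≤ t := t.cast_nonneg
      rw [abs_le]
      constructor <;> linarith
    · rw [Finset.card_range, nsmul_eq_mul]
      exact le_of_eq (by ring)
  have hE : ∀ j < k, |∑ ℓ ∈ Finset.Icc A B, v (ℓ + j) - S| ≤ E := by
    intro j hj
    have e1 := sum_Icc_split v A (A + j - 1) (B + k - 1) (by omega) (by omega)
    have e2 := sum_Icc_split v (A + j) (B + j) (B + k - 1) (by omega) (by omega)
    rw [show A + (j : ℤ) - 1 + 1 = A + j by ring, e2] at e1
    rw [sum_Icc_shift, hS, e1]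
    have b1 : |∑ x ∈ Finset.Icc A (A + j - 1), v x| ≤ ∑ x ∈ Finset.Icc A (A + k - 2), |v x| :=
      (Finset.abs_sum_le_sum_abs _ _).trans
        (sum_Icc_mono _ (fun x => abs_nonneg _) _ _ _ _ (by omega) (by omega))
    have b2 : |∑ x ∈ Finset.Icc (B + j + 1) (B + k - 1), v x|
        ≤ ∑ x ∈ Finset.Icc (B + 1) (B + k - 1), |v x| :=
      (Finset.abs_sum_le_sum_abs _ _).trans
        (sum_Icc_mono _ (fun x => abs_nonneg _) _ _ _ _ (by omega) (by omega))
    rw [abs_le] at b1 b2 ⊢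
    constructor <;> simp only [E] <;> linarith [b1.1, b1.2, b2.1, b2.2]
  calc _ = |∑ j ∈ Finset.range k, (∑ t ∈ Finset.range k, ((j : ℝ) - t))
          * (∑ ℓ ∈ Finset.Icc A B, v (ℓ + j) - S)| := by
        congr 1
        simp only [mul_sub]
        rw [Finset.sum_sub_distrib, ← Finset.sum_mul, hzero, zero_mul, sub_zero, Finset.sum_comm]
        simp only [Finset.mul_sum]
    _ ≤ ∑ j ∈ Finset.range k, (k : ℝ) ^ 2 * E := by
        refine (Finset.abs_sum_le_sum_abs _ _).trans (Finset.sum_le_sum fun j hj => ?_)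
        rw [abs_mul]
        have hj' := Finset.mem_range.1 hj
        exact mul_le_mul (hc j hj') (hE j hj') (abs_nonneg _) (by positivity)
    _ = _ := by
        simp only [Finset.sum_const, Finset.card_range, nsmul_eq_mul]
        ring

lemma fixed_range_bound {N : ℕ} {f G Q h : ℤ → ℝ} (hfp : Periodic2N N f) (hGp : Periodic2N N G)
    (hQp : Periodic2N N Q) (hhp : Periodic2N N h) {e : ℝ} (he : 0 ≤ e)
    (hf : ∀ x, f x - f (x - 1) = e * G x) (hG : ∀ x, G x - G (x - 1) = e * Q x)
    (K : ℤ) (k : ℕ) (hk : 2 ≤ k) (hK : 1 ≤ K) (hKN : K ≤ (N : ℤ) - k) :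
    |∑ ℓ ∈ Cqnl N K k, ∑ j ∈ Finset.range k,
        ((k : ℝ) * f (ℓ + j) - ∑ t ∈ Finset.range k, f (ℓ + t)) * h (ℓ + j)|
      ≤ (e ^ 2 * (k : ℝ) ^ 4 * √(∑ x ∈ Ctil N K k, Q x ^ 2)
          + e * (k : ℝ) ^ 3 * √(∑ x ∈ Iqnl K k, G x ^ 2))
        * √(∑ x ∈ rng N, h x ^ 2) := by
  have hshift : ∀ {v : ℤ → ℝ}, Periodic2N N v → ∀ (x : ℤ) (j : ℕ),
      v (x + 2 * (N : ℤ) + j) = v (x + j) := by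
    intro v hv x j
    rw [show x + 2 * (N : ℤ) + j = (x + j) + 2 * (N : ℤ) by ring, hv]
  rw [sum_Cqnl _ K k hk hK hKN]
  swap
  · intro x
    simp only [hshift hfp, hshift hhp]
  set A := K + 2 with hA
  set B := 2 * (N : ℤ) - K - k with hB
  set r : ℤ → ℕ → ℕ → ℝ := fun ℓ j t => f (ℓ + j) - f (ℓ + t) - ((j : ℝ) - t) * (e * G (ℓ + j))
    with hr
  have hdecomp : ∑ ℓ ∈ Finset.Icc A B, ∑ j ∈ Finset.range k,
        ((k : ℝ) * f (ℓ + j) - ∑ t ∈ Finset.range k, f (ℓ + t)) * h (ℓ + j)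
      = ∑ ℓ ∈ Finset.Icc A B, ∑ j ∈ Finset.range k, (∑ t ∈ Finset.range k, r ℓ j t) * h (ℓ + j)
        + e * ∑ ℓ ∈ Finset.Icc A B, ∑ j ∈ Finset.range k,
          (∑ t ∈ Finset.range k, ((j : ℝ) - t)) * (fun x => G x * h x) (ℓ + j) := by
    rw [Finset.mul_sum, ← Finset.sum_add_distrib]
    refine Finset.sum_congr rfl fun ℓ _ => ?_
    rw [Finset.mul_sum, ← Finset.sum_add_distrib]
    refine Finset.sum_congr rfl fun j _ => ?_
    have h1 : ∑ t ∈ Finset.range k, r ℓ j t = (k : ℝ) * f (ℓ + j)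
        - ∑ t ∈ Finset.range k, f (ℓ + t)
        - (∑ t ∈ Finset.range k, ((j : ℝ) - t)) * (e * G (ℓ + j)) := by
      simp only [hr]
      rw [Finset.sum_sub_distrib, Finset.sum_sub_distrib, Finset.sum_mul]
      simp
    rw [h1]
    ring
  have hR := remainder_bound Q h r (e ^ 2) (by positivity) A B k
    fun ℓ j hj t ht => taylor_bound he hf hG ℓ k j t hj ht
  have hL := leading_bound (fun x => G x * h x) A B k (by omega)
  have hBk : B + k - 1 = 2 * (N : ℤ) - K - 1 := by omega
  have hAk : A + k - 2 = K + k := by omega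
  have sq_per : ∀ {v : ℤ → ℝ}, Periodic2N N v → Periodic2N N (fun x => v x ^ 2) := by
    intro v hv x
    simp only [hv x]
  rw [hBk, ← sum_Ctil (sq_per hQp) K k hk hK hKN, ← sum_Ctil (sq_per hhp) K k hk hK hKN] at hR
  rw [hBk, hAk, ← sum_Iqnl (v := fun x => |G x * h x|) (fun x => by simp only [hGp x, hhp x]) K k hK]
    at hL
  have hrngC : √(∑ x ∈ Ctil N K k, h x ^ 2) ≤ √(∑ x ∈ rng N, h x ^ 2) :=
    Real.sqrt_le_sqrt (Finset.sum_le_sum_of_subset_of_nonneg (Ctil_subset_rng N K k hk hK hKN)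
      fun _ _ _ => sq_nonneg _)
  have hrngI : √(∑ x ∈ Iqnl K k, h x ^ 2) ≤ √(∑ x ∈ rng N, h x ^ 2) :=
    Real.sqrt_le_sqrt (Finset.sum_le_sum_of_subset_of_nonneg (Iqnl_subset_rng N K k hk hK hKN)
      fun _ _ _ => sq_nonneg _)
  have hCS : ∑ x ∈ Iqnl K k, |G x * h x|
      ≤ √(∑ x ∈ Iqnl K k, G x ^ 2) * √(∑ x ∈ Iqnl K k, h x ^ 2) := by
    have := Real.sum_mul_le_sqrt_mul_sqrt (Iqnl K k) (fun x => |G x|) (fun x => |h x|)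
    simpa only [sq_abs, ← abs_mul] using this
  rw [hdecomp]
  refine (abs_add_le _ _).trans ?_
  rw [abs_mul e, abs_of_nonneg he, add_mul]
  refine add_le_add (hR.trans ?_) ((mul_le_mul_of_nonneg_left hL he).trans ?_)
  · rw [mul_assoc (e ^ 2 * (k : ℝ) ^ 4)]
    gcongr
  · rw [mul_assoc (e * (k : ℝ) ^ 3), ← mul_assoc]
    gcongr
    exact hCS.trans (by gcongr)

/-- negative-norm estimate of the consistency error (ℓ² interface version). -/
theorem consistency_error_estimate (s : ℕ) (hs : 2 ≤ s) :
    ∃ C₁ C₂ : ℕ → ℝ,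
      (∀ k, 2 ≤ k → k ≤ s → 0 < C₁ k ∧ 0 < C₂ k) ∧
      ∀ (N : ℕ), 0 < N → ∀ (K : ℤ), 1 ≤ K → K ≤ (N : ℤ) - (s : ℤ) →
      ∀ (a : ℕ → ℝ) (u w : ℤ → ℝ), memU N u → memU N w →
        |Tconsist N s K a u w| ≤
          ((∑ k ∈ Finset.Icc 2 s,
              (eps N) ^ 2 * C₁ k * |a k| * nrmS N (Ctil N K k) (Dv N (Dv N (Dv N u))))
            + ∑ k ∈ Finset.Icc 2 s,
                eps N * C₂ k * |a k| * nrmS N (Iqnl K k) (Dv N (Dv N u)))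
            * nrm N (Dv N w) := by
  refine ⟨fun k => (k : ℝ) ^ 4, fun k => (k : ℝ) ^ 3, fun k hk _ => ?_, ?_⟩
  · have : (0 : ℝ) < k := by exact_mod_cast (by omega : 0 < k)
    constructor <;> positivity
  intro N hN K hK hKN a u w hu hw
  have he : 0 < eps N := by
    have : (0 : ℝ) < N := by exact_mod_cast hN
    unfold eps
    positivity
  have hdiff : ∀ (v : ℤ → ℝ) (x : ℤ), v x - v (x - 1) = eps N * Dv N v x := by
    intro v x
    simp only [Dv]
    field_simp
  have hf := Dv_periodic_s16 hu.1
  have hG := Dv_periodic_s16 hf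
  have hQ := Dv_periodic_s16 hG
  have hh := Dv_periodic_s16 hw.1
  rw [Tconsist, abs_mul, abs_of_pos he, ← Finset.sum_add_distrib, Finset.sum_mul]
  refine (mul_le_mul_of_nonneg_left (Finset.abs_sum_le_sum_abs _ _) he.le).trans ?_
  rw [Finset.mul_sum]
  refine Finset.sum_le_sum fun k hk => ?_
  rw [Finset.mem_Icc] at hk
  have key := fixed_range_bound hf hG hQ hh he.le (hdiff _) (hdiff _) K k hk.1 hK
    (by have := hk.2; omega)
  rw [abs_mul]
  refine (mul_le_mul_of_nonneg_left (mul_le_mul_of_nonneg_left key (abs_nonneg _)) he.le).trans ?_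
  simp only [nrmS, nrm, nsqS, nsq, Real.sqrt_mul he.le]
  -- The outer factor `ε` supplies one `√ε` to each of the two norms in every product.
  have hs2 : √(eps N) * √(eps N) = eps N := Real.mul_self_sqrt he.le
  refine le_of_eq ?_
  nth_rewrite 1 [← hs2]
  ring
end
end
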